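/- arXiv:2103.02489 — 2 statements merged into one kernel-verified Lean document; each statement's English description precedes it below -/
import Mathlib

section
/- Let L be a first-order language whose function and relation symbols form encodable families, so that L-formulas and L-terms carry encodings into the natural numbers. There exists a primitive recursive function s : ℕ → ℕ such that for every L-formula φ with exactly one free variable and every closed L-term t, s applied to the code of the pair (code of φ, code of t) equals the code of the sentence φ[x/t] obtained by substituting t for the free variable of φ. -/
/-!
A term or formula is coded by the code of a list of symbols, and the code of a list depends
only on the codes of its entries, so everything happens on lists of natural numbers.

In the list of a term over `Fin 1 ⊕ Fin k` the free variable has code `0`, while every bound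
variable and function symbol has a nonzero code, equal to its code over `Empty ⊕ Fin k`.
The symbols of a closed term also keep their codes there. Hence substitution in a term
replaces each entry `0` by the list of the closed term (`map_encode_listEncode_subst`).
The list of a formula has terms as single entries, coded by even numbers, and the other
entries, coded by odd numbers, are unaffected by substitution; so substitution in a formula is
an entrywise map (`map_encode_listEncode_formula_subst`). Both operations are primitive
recursive, by closure of primitive recursion under `List.flatMap` and `List.map`.
-/

open FirstOrder FirstOrder.Language

section Encoding

variable {L : FirstOrder.Language} {α : Type*} [Encodable α]
  [∀ n, Encodable (L.Functions n)] [∀ n, Encodable (L.Relations n)]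

/-- The encoding of (the sigma type of) bounded formulas induced by the encodings of the
symbols of the language, via `FirstOrder.Language.BoundedFormula.listEncode`. -/
instance sigmaBoundedFormulaEncodable :
    Encodable (Σ n, L.BoundedFormula α n) :=
  Encodable.ofLeftInjection
    (fun φ => φ.2.listEncode)
    (fun l => (BoundedFormula.listDecode l)[0]?)
    (fun φ => BoundedFormula.encoding.decode_encode φ)

/-- The induced encoding of bounded formulas with a fixed number of free de Bruijn
variables. -/
instance boundedFormulaEncodable (n : ℕ) :
    Encodable (L.BoundedFormula α n) :=
  Encodable.ofLeftInjection
    (fun φ => (⟨n, φ⟩ : Σ n, L.BoundedFormula α n))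
    (fun ψ => if h : ψ.1 = n then some (h ▸ ψ.2) else none)
    (fun φ => dif_pos rfl)

end Encoding

/-- Substitution on the code `x` of a term, viewed as a list of symbol codes: the code `0`
(the free variable) is replaced by the list of symbols coded by `u`. -/
def substTermCode (u x : ℕ) : ℕ :=
  Encodable.encode (((Encodable.decode (α := List ℕ) x).getD []).flatMap fun c =>
    if c = 0 then (Encodable.decode (α := List ℕ) u).getD [] else [c])

/-- Substitution on the code `c` of one symbol in the list of a formula. Even codes
`2 * Nat.pair k x` stand for terms with `k` bound variables; odd codes are kept. -/
def substSymbolCode (u c : ℕ) : ℕ :=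
  if c % 2 = 0 then 2 * Nat.pair (c / 2).unpair.1 (substTermCode u (c / 2).unpair.2) else c

/-- Substitution on the code `x` of a formula, viewed as a list of symbol codes. -/
def substFormulaCode (u x : ℕ) : ℕ :=
  Encodable.encode (((Encodable.decode (α := List ℕ) x).getD []).map (substSymbolCode u))

theorem primrec_decode_list_nat :
    Primrec fun x : ℕ => (Encodable.decode (α := List ℕ) x).getD [] :=
  Primrec.option_getD.comp Primrec.decode (Primrec.const [])

theorem primrec_substTermCode : Primrec₂ substTermCode := by
  refine Primrec.encode.comp (Primrec.list_flatMap
    (primrec_decode_list_nat.comp Primrec.snd) ?_)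
  exact Primrec.ite (Primrec.eq.comp Primrec.snd (Primrec.const 0))
    (primrec_decode_list_nat.comp (Primrec.fst.comp Primrec.fst))
    (Primrec.list_cons.comp Primrec.snd (Primrec.const []))

theorem primrec_substSymbolCode : Primrec₂ substSymbolCode := by
  have hhalf : Primrec fun p : ℕ × ℕ => (p.2 / 2).unpair :=
    Primrec.unpair.comp (Primrec.nat_div.comp Primrec.snd (Primrec.const 2))
  refine Primrec.ite
    (Primrec.eq.comp (Primrec.nat_mod.comp Primrec.snd (Primrec.const 2)) (Primrec.const 0))
    (Primrec.nat_mul.comp (Primrec.const 2) (Primrec₂.natPair.comp (Primrec.fst.comp hhalf)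
      (primrec_substTermCode.comp Primrec.fst (Primrec.snd.comp hhalf)))) Primrec.snd

theorem primrec_substFormulaCode : Primrec₂ substFormulaCode :=
  Primrec.encode.comp (Primrec.list_map (primrec_decode_list_nat.comp Primrec.snd)
    (primrec_substSymbolCode.comp (Primrec.fst.comp Primrec.fst) Primrec.snd))

theorem encode_list_eq_encode_map {β : Type*} [Encodable β] (l : List β) :
    Encodable.encode l = Encodable.encode (l.map Encodable.encode) := by
  induction l with
  | nil => rfl
  | cons a l ih => simp [Encodable.encode_list_cons, ih]

section Correctness

variable {L : FirstOrder.Language} [∀ n, Encodable (L.Functions n)]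

/-- A closed term has the same list of symbol codes in every context `Empty ⊕ Fin k`,
because that list contains no variables. -/
theorem map_encode_listEncode_relabel (t : L.Term Empty) (k : ℕ) :
    ((t.relabel Sum.inl : L.Term (Empty ⊕ Fin k)).listEncode.map Encodable.encode : List ℕ) =
      t.listEncode.map Encodable.encode := by
  induction t with
  | var a => exact a.elim
  | func f ts ih =>
    simp only [Term.relabel, Term.listEncode, List.map_cons, List.map_flatMap, ih]
    rfl

theorem map_encode_listEncode_subst (t : L.Term Empty) {k : ℕ} (r : L.Term (Fin 1 ⊕ Fin k)) :
    ((r.subst (Sum.elim (Term.relabel Sum.inl ∘ fun _ => t)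
      (Term.var ∘ Sum.inr)) : L.Term (Empty ⊕ Fin k)).listEncode.map Encodable.encode : List ℕ) =
      (r.listEncode.map Encodable.encode).flatMap fun c =>
        if c = 0 then t.listEncode.map Encodable.encode else [c] := by
  induction r with
  | var a =>
    rcases a with a | i
    · have h : Encodable.encode
          (Sum.inl (Sum.inl a) : (Fin 1 ⊕ Fin k) ⊕ Σ i, L.Functions i) = 0 := by
        have ha : a = 0 := Subsingleton.elim _ _
        subst ha
        rfl
      simp only [Term.subst, Term.listEncode, Sum.elim_inl, Function.comp, List.map_cons,
        List.map_nil, List.flatMap_cons, List.flatMap_nil, h, if_true, List.append_nil,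
        map_encode_listEncode_relabel]
    · have h : Encodable.encode
          (Sum.inl (Sum.inr i) : (Fin 1 ⊕ Fin k) ⊕ Σ i, L.Functions i) ≠ 0 := by
        simp [Encodable.encode_inl, Encodable.encode_inr]
      simp only [Term.subst, Term.listEncode, Sum.elim_inr, Function.comp, List.map_cons,
        List.map_nil, List.flatMap_cons, List.flatMap_nil, h, if_false, List.append_nil]
      rfl
  | @func n f ts ih =>
    have h : Encodable.encode
        (Sum.inr ⟨n, f⟩ : (Fin 1 ⊕ Fin k) ⊕ Σ i, L.Functions i) ≠ 0 := by
      simp [Encodable.encode_inr]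
    simp only [Term.subst, Term.listEncode, List.map_cons, List.map_flatMap, ih,
      List.flatMap_cons, h, if_false, List.flatMap_assoc]
    rfl

theorem encode_term (α : Type*) [Encodable α] (t : L.Term α) :
    Encodable.encode t = Encodable.encode (t.listEncode.map Encodable.encode) :=
  encode_list_eq_encode_map t.listEncode

theorem substTermCode_encode (t : L.Term Empty) {k : ℕ} (r : L.Term (Fin 1 ⊕ Fin k)) :
    substTermCode (Encodable.encode t) (Encodable.encode r) =
      Encodable.encode (r.subst (Sum.elim (Term.relabel Sum.inl ∘ fun _ => t)
        (Term.var ∘ Sum.inr)) : L.Term (Empty ⊕ Fin k)) := by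
  rw [encode_term, encode_term, encode_term, map_encode_listEncode_subst, substTermCode,
    Encodable.encodek, Encodable.encodek, Option.getD_some, Option.getD_some]

variable [∀ n, Encodable (L.Relations n)]

theorem substSymbolCode_inl (t : L.Term Empty) {k : ℕ} (r : L.Term (Fin 1 ⊕ Fin k)) :
    substSymbolCode (Encodable.encode t) (Encodable.encode
      (Sum.inl ⟨k, r⟩ : (Σ k, L.Term (Fin 1 ⊕ Fin k)) ⊕ ((Σ n, L.Relations n) ⊕ ℕ))) =
    Encodable.encode (Sum.inl ⟨k, r.subst (Sum.elim (Term.relabel Sum.inl ∘ fun _ => t)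
        (Term.var ∘ Sum.inr))⟩ :
          (Σ k, L.Term (Empty ⊕ Fin k)) ⊕ ((Σ n, L.Relations n) ⊕ ℕ)) := by
  simp [substSymbolCode, Encodable.encode_inl, Encodable.encode_sigma_val, substTermCode_encode]

theorem substSymbolCode_inr (u : ℕ) (x : (Σ n, L.Relations n) ⊕ ℕ) :
    substSymbolCode u (Encodable.encode
      (Sum.inr x : (Σ k, L.Term (Fin 1 ⊕ Fin k)) ⊕ ((Σ n, L.Relations n) ⊕ ℕ))) =
    Encodable.encode
      (Sum.inr x : (Σ k, L.Term (Empty ⊕ Fin k)) ⊕ ((Σ n, L.Relations n) ⊕ ℕ)) := by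
  have h : (2 * Encodable.encode x + 1) % 2 ≠ 0 := by omega
  simp only [substSymbolCode, Encodable.encode_inr, h, if_false]

theorem map_encode_listEncode_formula_subst (t : L.Term Empty) {n : ℕ}
    (φ : L.BoundedFormula (Fin 1) n) :
    (((φ.subst fun _ => t).listEncode).map Encodable.encode : List ℕ) =
      (φ.listEncode.map Encodable.encode).map (substSymbolCode (Encodable.encode t)) := by
  induction φ with
  | falsum =>
    simp only [BoundedFormula.subst, BoundedFormula.mapTermRel, BoundedFormula.listEncode,
      List.map_cons, List.map_nil, substSymbolCode_inr]
  | equal =>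
    simp only [BoundedFormula.subst, BoundedFormula.mapTermRel, BoundedFormula.listEncode,
      List.map_cons, List.map_nil, substSymbolCode_inl]
  | rel =>
    simp only [BoundedFormula.subst, BoundedFormula.mapTermRel, BoundedFormula.listEncode,
      List.map_cons, List.map_nil, List.map_append, List.map_map, Function.comp_def,
      substSymbolCode_inl, substSymbolCode_inr, id]
  | imp _ _ ih1 ih2 =>
    simp only [BoundedFormula.subst] at ih1 ih2
    simp only [BoundedFormula.subst, BoundedFormula.mapTermRel, BoundedFormula.listEncode,
      List.map_cons, List.map_append, substSymbolCode_inr, ih1, ih2]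
  | all _ ih =>
    simp only [BoundedFormula.subst] at ih
    simp only [BoundedFormula.subst, BoundedFormula.mapTermRel, BoundedFormula.listEncode,
      List.map_cons, substSymbolCode_inr, id, ih]

theorem encode_boundedFormula {α : Type*} [Encodable α] {n : ℕ} (φ : L.BoundedFormula α n) :
    Encodable.encode φ = Encodable.encode (φ.listEncode.map Encodable.encode) :=
  encode_list_eq_encode_map φ.listEncode

end Correctness

/-- Arithmetized substitution: there is a primitive recursive function which, applied to
the paired codes of a formula φ with exactly one free variable and a closed term t,
returns the code of the sentence φ[x/t] obtained by substituting t for the free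
variable of φ. -/
theorem primrec_substitution (L : FirstOrder.Language)
    [∀ n, Encodable (L.Functions n)] [∀ n, Encodable (L.Relations n)] :
    ∃ s : ℕ → ℕ, Nat.Primrec s ∧
      ∀ (φ : L.Formula (Fin 1)) (t : L.Term Empty),
        s (Nat.pair (Encodable.encode φ) (Encodable.encode t)) =
          Encodable.encode (φ.subst fun _ => t) := by
  refine ⟨fun n => substFormulaCode n.unpair.2 n.unpair.1, ?_, fun φ t => ?_⟩
  · exact Primrec.nat_iff.1 (primrec_substFormulaCode.comp
      (Primrec.snd.comp Primrec.unpair) (Primrec.fst.comp Primrec.unpair))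
  · simp only [Nat.unpair_pair]
    refine Eq.trans ?_ (encode_boundedFormula (φ.subst fun _ => t)).symm
    rw [map_encode_listEncode_formula_subst, substFormulaCode,
      show Encodable.encode φ = _ from encode_boundedFormula φ, Encodable.encodek,
      Option.getD_some]
end

section
/- Let L be a first-order language whose function and relation symbols form encodable families, and let num : ℕ → (closed L-terms) be a numeral function such that the map n ↦ code of num(n) is primitive recursive. Then there exists a primitive recursive function d : ℕ → ℕ such that for every L-formula φ with exactly one free variable, d applied to the code of φ equals the code of the diagonalization of φ, i.e. the sentence φ[x/num(⌜φ⌝)] obtained by substituting the numeral of φ's own code for its free variable. -/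
/-!
Both the formula `φ` and the terms inside it are coded as lists of symbol codes, so substitution
can be carried out on lists of natural numbers, without ever decoding a symbol of the language
(which need not be possible primitive-recursively).

* In the code of a term over `Fin 1 ⊕ Fin k`, the free variable is the symbol with code `0`; all
  other symbols have a nonzero code, which does not change when `Fin 1` is replaced by `Empty`.
  Substituting a closed term therefore means replacing each entry `0` by the list of symbol codes
  of that closed term (`encode_term_subst`).
* In the code of a formula, the even entries `2 * ⟨k, t⟩` are the terms `t` over `Fin 1 ⊕ Fin k`,
  and the odd entries are relation symbols and structural markers, which substitution leaves alone.
  Substitution is thus an entrywise map (`map_encode_subst`).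

Maps and concatenations of lists of natural numbers are primitive recursive, and composing with the
primitive recursive code of `num ⌜φ⌝` gives the diagonalization function.
-/

open FirstOrder FirstOrder.Language

namespace Diagonalization

open Encodable

/-- Substitution on codes of terms: in the list of symbol codes coded by `m`, replace every `0`
(the code of the free variable) by the list `s`. -/
def termCodeSubst (s : List ℕ) (m : ℕ) : ℕ :=
  encode ((Denumerable.ofNat (List ℕ) m).flatMap fun c => if c = 0 then s else [c])

/-- Substitution on one entry of the code of a formula: an even entry `2 * ⟨k, t⟩` carries the
term code `t`, in which `s` is substituted; odd entries contain no terms. -/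
def symbolCodeSubst (s : List ℕ) (c : ℕ) : ℕ :=
  if c % 2 = 0 then
    2 * Nat.pair (c / 2).unpair.1 (termCodeSubst s (c / 2).unpair.2)
  else c

/-- The diagonalization function on codes, given the function `f` computing codes of numerals. -/
def diagCode (f : ℕ → ℕ) (n : ℕ) : ℕ :=
  encode ((Denumerable.ofNat (List ℕ) n).map
    (symbolCodeSubst (Denumerable.ofNat (List ℕ) (f n))))

theorem primrec_termCodeSubst : Primrec₂ termCodeSubst := by
  refine Primrec.encode.comp (Primrec.list_flatMap ((Primrec.ofNat (List ℕ)).comp Primrec.snd) ?_)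
  exact Primrec.ite (Primrec.eq.comp Primrec.snd (Primrec.const 0))
    (Primrec.fst.comp Primrec.fst)
    (Primrec.list_cons.comp Primrec.snd (Primrec.const []))

theorem primrec_symbolCodeSubst : Primrec₂ symbolCodeSubst := by
  have hu : Primrec fun p : List ℕ × ℕ => (p.2 / 2).unpair :=
    Primrec.unpair.comp (Primrec.nat_div.comp Primrec.snd (Primrec.const 2))
  refine Primrec.ite
    (Primrec.eq.comp (Primrec.nat_mod.comp Primrec.snd (Primrec.const 2)) (Primrec.const 0))
    (Primrec.nat_mul.comp (Primrec.const 2) (Primrec₂.natPair.comp (Primrec.fst.comp hu) ?_))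
    Primrec.snd
  exact primrec_termCodeSubst.comp Primrec.fst (Primrec.snd.comp hu)

theorem primrec_diagCode {f : ℕ → ℕ} (hf : Primrec f) : Primrec (diagCode f) := by
  refine Primrec.encode.comp (Primrec.list_map (Primrec.ofNat (List ℕ)) ?_)
  exact primrec_symbolCodeSubst.comp
    (((Primrec.ofNat (List ℕ)).comp hf).comp Primrec.fst) Primrec.snd

/-- The code of a list depends only on the codes of its entries. -/
theorem encode_list_map {α : Type*} [Encodable α] (l : List α) :
    encode l = encode (l.map encode) := by
  induction l with
  | nil => rfl
  | cons a l ih => rw [List.map_cons, encode_list_cons, encode_list_cons, ih, encode_nat]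

theorem ofNat_encode_list {α : Type*} [Encodable α] (l : List α) :
    Denumerable.ofNat (List ℕ) (encode l) = l.map encode := by
  rw [encode_list_map, Denumerable.ofNat_encode]

variable {L : FirstOrder.Language} [∀ n, Encodable (L.Functions n)]

theorem encode_term {α : Type*} [Encodable α] (t : L.Term α) :
    encode t = encode t.listEncode := rfl

/-- A closed term has no variable symbols, so its symbol codes do not depend on the type of
variables it is regarded over. -/
theorem map_encode_relabel {k : ℕ} (t : L.Term Empty) :
    (t.relabel (Sum.inl : Empty → Empty ⊕ Fin k)).listEncode.map encode =
      t.listEncode.map encode := by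
  induction t with
  | var x => exact x.elim
  | func f ts ih =>
    simp only [Term.relabel, Term.listEncode, List.map_cons, List.map_flatMap, ih]
    rfl

/-- The substitution of the closed term `u` for the free variable, at quantifier depth `k`. -/
abbrev substFun (u : L.Term Empty) (k : ℕ) : Fin 1 ⊕ Fin k → L.Term (Empty ⊕ Fin k) :=
  Sum.elim (Term.relabel Sum.inl ∘ fun _ => u) (Term.var ∘ Sum.inr)

theorem map_encode_term_subst {k : ℕ} (u : L.Term Empty) (t : L.Term (Fin 1 ⊕ Fin k)) :
    (t.subst (substFun u k)).listEncode.map encode =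
      (t.listEncode.map encode).flatMap
        fun c => if c = 0 then u.listEncode.map encode else [c] := by
  induction t with
  | var x =>
    rcases x with x | i
    · have hx : encode (Sum.inl (Sum.inl x) :
          (Fin 1 ⊕ Fin k) ⊕ (Σ i, L.Functions i)) = 0 := by
        rw [Subsingleton.elim x 0]; rfl
      simp [Term.subst, Term.listEncode, hx, map_encode_relabel]
    · simp [Term.subst, Term.listEncode]
  | func f ts ih =>
    simp [Term.subst, Term.listEncode, ih, List.map_flatMap, List.flatMap_assoc]

theorem encode_term_subst {k : ℕ} (u : L.Term Empty) (t : L.Term (Fin 1 ⊕ Fin k)) :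
    encode (t.subst (substFun u k)) = termCodeSubst (u.listEncode.map encode) (encode t) := by
  rw [termCodeSubst, encode_term, encode_term, ofNat_encode_list, ← map_encode_term_subst,
    ← encode_list_map]

variable [∀ n, Encodable (L.Relations n)]

/-- The action of `symbolCodeSubst` on a term entry of the code of a formula. -/
theorem symbolCodeSubst_term {k : ℕ} (u : L.Term Empty) (t : L.Term (Fin 1 ⊕ Fin k)) :
    symbolCodeSubst (u.listEncode.map encode)
        (encode (Sum.inl ⟨k, t⟩ :
          (Σ k, L.Term (Fin 1 ⊕ Fin k)) ⊕ ((Σ n, L.Relations n) ⊕ ℕ))) =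
      encode (Sum.inl ⟨k, t.subst (substFun u k)⟩ :
        (Σ k, L.Term (Empty ⊕ Fin k)) ⊕ ((Σ n, L.Relations n) ⊕ ℕ)) := by
  simp [symbolCodeSubst, encode_term_subst]

/-- The action of `symbolCodeSubst` on a relation symbol or a structural marker. -/
theorem symbolCodeSubst_symbol (s : List ℕ) (x : (Σ n, L.Relations n) ⊕ ℕ) :
    symbolCodeSubst s
        (encode (Sum.inr x :
          (Σ k, L.Term (Fin 1 ⊕ Fin k)) ⊕ ((Σ n, L.Relations n) ⊕ ℕ))) =
      encode (Sum.inr x :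
        (Σ k, L.Term (Empty ⊕ Fin k)) ⊕ ((Σ n, L.Relations n) ⊕ ℕ)) := by
  rw [encode_inr, encode_inr, symbolCodeSubst, if_neg (by omega)]

theorem map_encode_subst (u : L.Term Empty) {n : ℕ} (φ : L.BoundedFormula (Fin 1) n) :
    (φ.subst fun _ => u).listEncode.map encode =
      (φ.listEncode.map encode).map (symbolCodeSubst (u.listEncode.map encode)) := by
  have ht := fun k => symbolCodeSubst_term (L := L) (k := k) u
  have hs := symbolCodeSubst_symbol (L := L) (u.listEncode.map encode)
  unfold BoundedFormula.subst
  induction φ with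
  | falsum =>
    simp only [BoundedFormula.mapTermRel, BoundedFormula.listEncode, List.map_cons, List.map_nil,
      hs]
  | equal t₁ t₂ =>
    simp only [BoundedFormula.mapTermRel, BoundedFormula.listEncode, List.map_cons, List.map_nil,
      ht]
  | rel R ts =>
    simp only [BoundedFormula.mapTermRel, BoundedFormula.listEncode, List.map_cons, List.map_nil,
      List.map_append, List.map_map, hs, id]
    congr 1
    exact List.map_congr_left fun i _ => (ht _ (ts i)).symm
  | imp _ _ ih₁ ih₂ =>
    simp only [BoundedFormula.mapTermRel, BoundedFormula.listEncode, List.map_cons,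
      List.map_append, hs, ih₁, ih₂]
  | all _ ih =>
    simp only [BoundedFormula.mapTermRel, BoundedFormula.listEncode, List.map_cons, hs, ← ih]
    rfl

theorem encode_formula {α : Type*} [Encodable α] (φ : L.Formula α) :
    encode φ = encode (BoundedFormula.listEncode φ) := rfl

end Diagonalization

/-- Diagonalization is primitive recursive: given a numeral function num whose coding is
primitive recursive, there is a primitive recursive function d sending the code of a
formula φ with exactly one free variable to the code of its diagonalization
φ[x/num(⌜φ⌝)]. -/
theorem primrec_diagonalization (L : FirstOrder.Language)
    [∀ n, Encodable (L.Functions n)] [∀ n, Encodable (L.Relations n)]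
    (num : ℕ → L.Term Empty)
    (hnum : Nat.Primrec fun n => Encodable.encode (num n)) :
    ∃ d : ℕ → ℕ, Nat.Primrec d ∧
      ∀ φ : L.Formula (Fin 1),
        d (Encodable.encode φ) =
          Encodable.encode (φ.subst fun _ => num (Encodable.encode φ)) := by
  refine ⟨Diagonalization.diagCode fun n => Encodable.encode (num n),
    Primrec.nat_iff.1 (Diagonalization.primrec_diagCode (Primrec.nat_iff.2 hnum)), fun φ => ?_⟩
  rw [Diagonalization.diagCode]
  generalize num (Encodable.encode φ) = u
  rw [Diagonalization.encode_formula, Diagonalization.encode_formula, Diagonalization.encode_term,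
    Diagonalization.ofNat_encode_list, Diagonalization.ofNat_encode_list,
    Diagonalization.encode_list_map (BoundedFormula.listEncode _)]
  exact congrArg Encodable.encode (Diagonalization.map_encode_subst u φ).symm
end
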